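/- Let α ∈ [0,1) and let c_α ∈ (0, π/2] satisfy sin(2c_α)/(2c_α) = α². Assume ‖u⁰‖_∞ ≤ c_α and let Δt > 0. Then the semi-implicit Euler scheme satisfies ‖D^{−α} uⁿ‖_∞ ≤ ‖D^{−α} u⁰‖_∞ for all n ≥ 0. -/

import Mathlib

open Real Matrix

noncomputable section

/-- Mesh size `h = 1/(N+1)`. -/
def hmesh (N : ℕ) : ℝ := 1 / (N + 1)

/-- Grid points `x_i = i·h`, `i = 1,…,N` (here `i : Fin N` corresponds to `i+1`). -/
def gridx (N : ℕ) (i : Fin N) : ℝ := ((i : ℕ) + 1) * hmesh N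

/-- `A = (1/h²)·tridiag(−1,2,−1)`. -/
def matA (N : ℕ) : Matrix (Fin N) (Fin N) ℝ := fun i j =>
  (1 / (hmesh N) ^ 2) *
    (if (i : ℕ) = (j : ℕ) then 2
     else if (i : ℕ) + 1 = (j : ℕ) ∨ (j : ℕ) + 1 = (i : ℕ) then -1 else 0)

/-- `B = (1/(2h))·tridiag(−1,0,1)`. -/
def matB (N : ℕ) : Matrix (Fin N) (Fin N) ℝ := fun i j =>
  (1 / (2 * hmesh N)) *
    (if (i : ℕ) + 1 = (j : ℕ) then 1
     else if (j : ℕ) + 1 = (i : ℕ) then -1 else 0)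

/-- `D = diag(x_1,…,x_N)`. -/
def matD (N : ℕ) : Matrix (Fin N) (Fin N) ℝ := Matrix.diagonal (gridx N)

/-- `D^β = diag(x_1^β,…,x_N^β)` (real powers). -/
def matDpow (N : ℕ) (β : ℝ) : Matrix (Fin N) (Fin N) ℝ :=
  Matrix.diagonal (fun i => gridx N i ^ β)

/-- `C = A − D⁻¹B`. -/
def matC (N : ℕ) : Matrix (Fin N) (Fin N) ℝ :=
  matA N - Matrix.diagonal (fun i => (gridx N i)⁻¹) * matB N

/-- `g(y) = sin(2y)/(2y)` for `y ≠ 0`, `g(0) = 1`. -/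
def gfun (y : ℝ) : ℝ := if y = 0 then 1 else Real.sin (2 * y) / (2 * y)

/-- `G(u) = diag(g(u_1),…,g(u_N))`. -/
def matG {N : ℕ} (u : Fin N → ℝ) : Matrix (Fin N) (Fin N) ℝ :=
  Matrix.diagonal (fun i => gfun (u i))

/-- The matrix `I + Δt(C + G(v)D⁻²)` of the semi-implicit Euler scheme. -/
def stepMat (N : ℕ) (Δt : ℝ) (v : Fin N → ℝ) : Matrix (Fin N) (Fin N) ℝ :=
  1 + Δt • (matC N + matG v * matDpow N (-2))

/-- Operator norm of a matrix induced by the maximum norm on `ℝ^N`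
(the Pi norm on `Fin N → ℝ` is the sup norm). -/
def opNormInf {N : ℕ} (M : Matrix (Fin N) (Fin N) ℝ) : ℝ :=
  ‖(LinearMap.toContinuousLinearMap (Matrix.mulVecLin M) :
      (Fin N → ℝ) →L[ℝ] (Fin N → ℝ))‖

end

/-!
The step matrix `M` has nonpositive off-diagonal entries, so it is inverse-monotone as soon as
`M w > 0` for some `w > 0`, and then `M w ≥ w` turns `|v| ≤ K w` into `|M⁻¹ v| ≤ K w`. This is
applied to `w = x ^ a`: the continuous operator `-∂² - x⁻¹ ∂` sends `x ^ a` to `-a² x ^ (a - 2)`,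
and for `0 ≤ a ≤ 1` the discrete one does no worse, because every binomial coefficient beyond
second order in its expansion has the favourable sign. Hence `M w ≥ w` whenever `g(uⁿ) ≥ a²`. With
`a = 0` this gives `‖uⁿ‖_∞ ≤ c_α`, hence `g(uⁿ) ≥ g(c_α) = α²`, which is the condition for `a = α`.
-/

section ZMatrix

variable {ι R : Type*} [Fintype ι] [Field R] [LinearOrder R] [IsStrictOrderedRing R]
  {M : Matrix ι ι R} {w v z : ι → R}

theorem nonneg_of_mulVec_nonneg (hM : Pairwise fun i j => M i j ≤ 0) (hw : ∀ i, 0 < w i)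
    (hMw : ∀ i, 0 < (M *ᵥ w) i) (hMv : 0 ≤ M *ᵥ v) : 0 ≤ v := by
  intro i
  have : Nonempty ι := ⟨i⟩
  obtain ⟨k, hk⟩ := Finite.exists_min fun j => v j / w j
  set μ := v k / w k
  have hv : ∀ j, μ * w j ≤ v j := fun j => (le_div_iff₀ (hw j)).1 (hk j)
  have hvk : v k = μ * w k := (div_mul_cancel₀ _ (hw k).ne').symm
  have hrow : (M *ᵥ (v - μ • w)) k ≤ 0 := by
    refine Finset.sum_nonpos fun j _ => ?_
    rcases eq_or_ne k j with rfl | hkj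
    · simp [hvk]
    · exact mul_nonpos_of_nonpos_of_nonneg (hM hkj) (sub_nonneg.2 (hv j))
  have hμ_nonneg : 0 ≤ μ := by
    rw [mulVec_sub, mulVec_smul, Pi.sub_apply, Pi.smul_apply, smul_eq_mul, sub_nonpos] at hrow
    exact nonneg_of_mul_nonneg_left ((hMv k).trans hrow) (hMw k)
  exact (mul_nonneg hμ_nonneg (hw i).le).trans (hv i)

theorem abs_le_of_abs_mulVec_le (hM : Pairwise fun i j => M i j ≤ 0) (hw : ∀ i, 0 < w i)
    (hMw : ∀ i, 0 < (M *ᵥ w) i) (hMv : |M *ᵥ v| ≤ M *ᵥ z) : |v| ≤ z := by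
  obtain ⟨hle, hneg⟩ := abs_le'.1 hMv
  refine abs_le'.2 ⟨sub_nonneg.1 ?_, sub_nonneg.1 ?_⟩ <;>
    refine nonneg_of_mulVec_nonneg hM hw hMw ?_
  · rwa [mulVec_sub, sub_nonneg]
  · rwa [mulVec_sub, mulVec_neg, sub_nonneg]

end ZMatrix

section BinomialCoefficients

variable {R : Type*} [CommRing R] [BinomialRing R]

theorem succ_mul_choose_succ (a : R) (n : ℕ) :
    (n + 1) * Ring.choose a (n + 1) = Ring.choose a n * (a - n) := by
  simpa [Nat.choose_succ_self_right] using Ring.choose_smul_choose a n.le_succ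

theorem succ_mul_choose_add_one_add_choose (a : R) (n : ℕ) :
    (n + 1) * (Ring.choose (a + 1) (n + 1) + Ring.choose a (n + 1)) =
      Ring.choose a n * (2 * a + 1 - n) := by
  rw [Ring.choose_succ_succ]
  linear_combination 2 * succ_mul_choose_succ a n

end BinomialCoefficients

section BinomialSeries

variable {a s : ℝ}

theorem choose_odd_nonneg (ha₀ : 0 ≤ a) (ha₁ : a ≤ 1) (m : ℕ) :
    0 ≤ Ring.choose a (2 * m + 1) := by
  induction m with
  | zero => simpa using ha₀
  | succ m ih =>
    have hodd := succ_mul_choose_succ a (2 * m + 1)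
    have heven := succ_mul_choose_succ a (2 * m + 2)
    push_cast at hodd heven
    have hnonpos : Ring.choose a (2 * m + 2) ≤ 0 :=
      nonpos_of_mul_nonpos_right
        (hodd.trans_le (mul_nonpos_of_nonneg_of_nonpos ih (by linarith))) (by positivity)
    exact nonneg_of_mul_nonneg_right
      ((mul_nonneg_of_nonpos_of_nonpos hnonpos (by linarith)).trans_eq heven.symm) (by positivity)

theorem choose_add_one_add_choose_even_nonpos (ha₀ : 0 ≤ a) (ha₁ : a ≤ 1) (m : ℕ) :
    Ring.choose (a + 1) (2 * (m + 2)) + Ring.choose a (2 * (m + 2)) ≤ 0 := by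
  have h := succ_mul_choose_add_one_add_choose a (2 * (m + 1) + 1)
  push_cast at h
  exact nonpos_of_mul_nonpos_right
    (h.trans_le (mul_nonpos_of_nonneg_of_nonpos (choose_odd_nonneg ha₀ ha₁ (m + 1))
      (by linarith))) (by positivity)

theorem hasSum_choose_mul_pow (a : ℝ) (hs : |s| < 1) :
    HasSum (fun n : ℕ => Ring.choose a n * s ^ n) ((1 + s) ^ a) := by
  have h := (Real.one_add_rpow_hasFPowerSeriesOnBall_zero (a := a)).hasSum
    (y := s) (by simpa [enorm_eq_nnnorm, ← NNReal.coe_lt_coe] using hs)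
  simpa [binomialSeries, FormalMultilinearSeries.coeff_ofScalars, mul_comm] using h

theorem hasSum_choose_even_mul_pow (a : ℝ) (hs : |s| < 1) :
    HasSum (fun m : ℕ => Ring.choose a (2 * m) * s ^ (2 * m))
      (((1 + s) ^ a + (1 - s) ^ a) / 2) := by
  have h := ((hasSum_choose_mul_pow a hs).add
    (hasSum_choose_mul_pow a (s := -s) (by rwa [abs_neg]))).div_const 2
  rw [← sub_eq_add_neg,
    ← (mul_right_injective₀ (two_ne_zero' ℕ)).hasSum_iff] at h
  · refine h.congr_fun fun m => ?_
    simp [(even_two_mul m).neg_pow]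
  · intro n hn
    have hodd : Odd n := Nat.not_even_iff_odd.1 fun ⟨m, hm⟩ => hn ⟨m, (two_mul m).trans hm.symm⟩
    simp [hodd.neg_pow]

theorem weighted_rpow_add_rpow_le_of_abs_lt_one (ha₀ : 0 ≤ a) (ha₁ : a ≤ 1) (hs : |s| < 1) :
    (1 + s / 2) * (1 + s) ^ a + (1 - s / 2) * (1 - s) ^ a ≤ 2 + a ^ 2 * s ^ 2 := by
  obtain ⟨hs₁, hs₂⟩ := abs_lt.1 hs
  let c : ℕ → ℝ := fun m => Ring.choose (a + 1) (2 * m) + Ring.choose a (2 * m)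
  have hsum : HasSum (fun m => c m * s ^ (2 * m))
      ((1 + s / 2) * (1 + s) ^ a + (1 - s / 2) * (1 - s) ^ a) := by
    convert (hasSum_choose_even_mul_pow (a + 1) hs).add (hasSum_choose_even_mul_pow a hs) using 1
    · simp only [c, add_mul]
    · rw [rpow_add_one (by linarith), rpow_add_one (by linarith)]
      ring
  have hc₀ : c 0 = 2 := by norm_num [c]
  have hc₁ : c 1 = a ^ 2 := by
    have h : (1 + 1) * c 1 = a * (2 * a + 1 - 1) := by
      simpa [c] using succ_mul_choose_add_one_add_choose a 1
    linear_combination h / 2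
  have htail : ∀ m ∉ Finset.range 2, c m * s ^ (2 * m) ≤ 0 := by
    intro m hm
    obtain ⟨m, rfl⟩ := Nat.exists_eq_add_of_le' (not_lt.1 (Finset.mem_range.not.1 hm))
    exact mul_nonpos_of_nonpos_of_nonneg (choose_add_one_add_choose_even_nonpos ha₀ ha₁ m)
      ((even_two_mul _).pow_nonneg s)
  have hle := sum_le_hasSum _ (fun m hm => neg_nonneg.2 (htail m hm)) hsum.neg
  rw [Finset.sum_neg_distrib, neg_le_neg_iff] at hle
  simpa [Finset.sum_range_succ, hc₀, hc₁] using hle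

theorem weighted_rpow_add_rpow_le (ha₀ : 0 ≤ a) (ha₁ : a ≤ 1) (hs : |s| ≤ 1) :
    (1 + s / 2) * (1 + s) ^ a + (1 - s / 2) * (1 - s) ^ a ≤ 2 + a ^ 2 * s ^ 2 := by
  have hmem : s ∈ closure (Set.Ioo (-1) 1) := by
    rw [closure_Ioo (by norm_num)]
    exact abs_le.1 hs
  exact le_on_closure
    (f := fun t => (1 + t / 2) * (1 + t) ^ a + (1 - t / 2) * (1 - t) ^ a)
    (g := fun t => 2 + a ^ 2 * t ^ 2)
    (fun t ht => weighted_rpow_add_rpow_le_of_abs_lt_one ha₀ ha₁ (abs_lt.2 ht))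
    (by fun_prop (disch := simp)) (by fun_prop) hmem

theorem weighted_add_rpow_add_sub_rpow_le {h x : ℝ} (ha₀ : 0 ≤ a) (ha₁ : a ≤ 1) (hx : 0 < x)
    (hhx : |h| ≤ x) :
    (1 + h / (2 * x)) * (x + h) ^ a + (1 - h / (2 * x)) * (x - h) ^ a ≤
      2 * x ^ a + a ^ 2 * h ^ 2 * x ^ (a - 2) := by
  have hs : |h / x| ≤ 1 := by rwa [abs_div, abs_of_pos hx, div_le_one hx]
  obtain ⟨hs₁, hs₂⟩ := abs_le.1 hs
  have hadd : (x + h) ^ a = x ^ a * (1 + h / x) ^ a := by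
    rw [← mul_rpow hx.le (by linarith), mul_add, mul_one, mul_div_cancel₀ _ hx.ne']
  have hsub : (x - h) ^ a = x ^ a * (1 - h / x) ^ a := by
    rw [← mul_rpow hx.le (by linarith), mul_sub, mul_one, mul_div_cancel₀ _ hx.ne']
  rw [hadd, hsub, rpow_sub hx, rpow_two]
  calc (1 + h / (2 * x)) * (x ^ a * (1 + h / x) ^ a) +
        (1 - h / (2 * x)) * (x ^ a * (1 - h / x) ^ a)
      = x ^ a * ((1 + h / x / 2) * (1 + h / x) ^ a + (1 - h / x / 2) * (1 - h / x) ^ a) := by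
        ring
    _ ≤ x ^ a * (2 + a ^ 2 * (h / x) ^ 2) :=
        mul_le_mul_of_nonneg_left (weighted_rpow_add_rpow_le ha₀ ha₁ hs) (rpow_nonneg hx.le a)
    _ = 2 * x ^ a + a ^ 2 * h ^ 2 * (x ^ a / x ^ 2) := by ring

end BinomialSeries

theorem antitoneOn_sinc : AntitoneOn sinc (Set.Icc 0 π) := by
  intro x hx y hy hxy
  rcases hx.1.eq_or_lt with rfl | hx₀
  · simpa using sinc_le_one y
  have hy₀ : 0 < y := hx₀.trans_le hxy
  simpa [slope_def_field, sinc_of_ne_zero, hx₀.ne', hy₀.ne'] using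
    strictConcaveOn_sin_Icc.concaveOn.slope_anti (Set.left_mem_Icc.2 pi_pos.le)
      ⟨hx, hx₀.ne'⟩ ⟨hy, hy₀.ne'⟩ hxy

theorem gfun_eq_sinc (y : ℝ) : gfun y = sinc (2 * y) := by
  simp [gfun, sinc_apply]

theorem gfun_abs (y : ℝ) : gfun |y| = gfun y := by
  rcases abs_choice y with h | h <;> simp [h, gfun_eq_sinc]

theorem antitoneOn_gfun : AntitoneOn gfun (Set.Icc 0 (π / 2)) := by
  intro x hx y hy hxy
  rw [gfun_eq_sinc, gfun_eq_sinc]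
  exact antitoneOn_sinc ⟨by linarith [hx.1], by linarith [hx.2]⟩
    ⟨by linarith [hy.1], by linarith [hy.2]⟩ (by linarith)

section Grid

variable {N : ℕ}

theorem hmesh_pos (N : ℕ) : 0 < hmesh N := by
  unfold hmesh
  positivity

theorem gridx_pos (i : Fin N) : 0 < gridx N i :=
  mul_pos (by positivity) (hmesh_pos N)

theorem hmesh_le_gridx (i : Fin N) : hmesh N ≤ gridx N i :=
  le_mul_of_one_le_left (hmesh_pos N).le (by simp)

theorem hmesh_div_two_mul_gridx_le_one (i : Fin N) : hmesh N / (2 * gridx N i) ≤ 1 :=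
  (div_le_one (by linarith [gridx_pos i])).2 (by linarith [hmesh_le_gridx i, gridx_pos i])

theorem gridx_of_succ_eq {i j : Fin N} (hij : (i : ℕ) + 1 = j) :
    gridx N j = gridx N i + hmesh N := by
  rw [gridx, gridx, ← hij]
  push_cast
  ring

theorem matC_apply (i j : Fin N) :
    matC N i j = (hmesh N ^ 2)⁻¹ * ((if i = j then 2 else 0)
      - (if (i : ℕ) + 1 = j then 1 + hmesh N / (2 * gridx N i) else 0)
      - (if (j : ℕ) + 1 = i then 1 - hmesh N / (2 * gridx N i) else 0)) := by
  have hh := (hmesh_pos N).ne'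
  have hx := (gridx_pos i).ne'
  rw [matC, Matrix.sub_apply, Matrix.diagonal_mul, matA, matB]
  simp only [Fin.ext_iff]
  split_ifs <;> first | omega | (field_simp; try ring)

theorem pairwise_matC_nonpos : Pairwise fun i j => matC N i j ≤ 0 := by
  intro i j hij
  have hpos : 0 ≤ hmesh N / (2 * gridx N i) :=
    div_nonneg (hmesh_pos N).le (by linarith [gridx_pos i])
  have hle := hmesh_div_two_mul_gridx_le_one i
  rw [matC_apply, if_neg hij]
  refine mul_nonpos_of_nonneg_of_nonpos (by positivity) ?_
  split_ifs <;> linarith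

-- Only an inequality: the first and last rows of `C` drop the values of `f` at `0` and `1`.
theorem le_matC_mulVec {f : ℝ → ℝ} {i : Fin N} (hadd : 0 ≤ f (gridx N i + hmesh N))
    (hsub : 0 ≤ f (gridx N i - hmesh N)) :
    (hmesh N ^ 2)⁻¹ * (2 * f (gridx N i)
        - (1 + hmesh N / (2 * gridx N i)) * f (gridx N i + hmesh N)
        - (1 - hmesh N / (2 * gridx N i)) * f (gridx N i - hmesh N)) ≤
      (matC N *ᵥ fun j => f (gridx N j)) i := by
  set x := gridx N i
  set h := hmesh N
  set σ := h / (2 * x)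
  have hσ₀ : 0 ≤ σ := div_nonneg (hmesh_pos N).le (by linarith [gridx_pos i])
  have hσ₁ : σ ≤ 1 := hmesh_div_two_mul_gridx_le_one i
  have hterm : ∀ j, matC N i j * f (gridx N j) = (h ^ 2)⁻¹ * ((if i = j then 2 * f x else 0)
      - (if (i : ℕ) + 1 = j then (1 + σ) * f (x + h) else 0)
      - (if (j : ℕ) + 1 = i then (1 - σ) * f (x - h) else 0)) := by
    intro j
    have hself (hij : i = j) : gridx N j = x := by rw [← hij]
    have hnext (hij : (i : ℕ) + 1 = j) : gridx N j = x + h := gridx_of_succ_eq hij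
    have hprev (hji : (j : ℕ) + 1 = i) : gridx N j = x - h :=
      eq_sub_of_add_eq (gridx_of_succ_eq hji).symm
    rw [matC_apply]
    grind
  have hsum_next : ∑ j : Fin N, (if (i : ℕ) + 1 = j then (1 + σ) * f (x + h) else 0) ≤
      (1 + σ) * f (x + h) := by
    rw [Finset.sum_ite_zero _ _ (by omega)]
    split_ifs
    exacts [le_rfl, by positivity]
  have hsum_prev : ∑ j : Fin N, (if (j : ℕ) + 1 = i then (1 - σ) * f (x - h) else 0) ≤
      (1 - σ) * f (x - h) := by
    rw [Finset.sum_ite_zero _ _ (by omega)]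
    split_ifs
    exacts [le_rfl, mul_nonneg (sub_nonneg.2 hσ₁) hsub]
  rw [mulVec, dotProduct, Finset.sum_congr rfl fun j _ => hterm j, ← Finset.mul_sum,
    Finset.sum_sub_distrib, Finset.sum_sub_distrib, Finset.sum_ite_eq, if_pos (Finset.mem_univ i)]
  gcongr

theorem neg_sq_mul_rpow_le_matC_mulVec_rpow {a : ℝ} (ha₀ : 0 ≤ a) (ha₁ : a ≤ 1) (i : Fin N) :
    -(a ^ 2 * gridx N i ^ (a - 2)) ≤ (matC N *ᵥ fun j => gridx N j ^ a) i := by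
  have hh := hmesh_pos N
  have hx := gridx_pos i
  have hhx := hmesh_le_gridx i
  refine le_trans ?_ (le_matC_mulVec (f := (· ^ a)) (rpow_nonneg (by linarith) a)
    (rpow_nonneg (by linarith) a))
  rw [le_inv_mul_iff₀ (by positivity)]
  linarith [weighted_add_rpow_add_sub_rpow_le ha₀ ha₁ hx ((abs_of_pos hh).trans_le hhx)]

end Grid

section Scheme

variable {N : ℕ} {Δt a : ℝ} {v z : Fin N → ℝ}

theorem pairwise_stepMat_nonpos (hΔt : 0 ≤ Δt) (v : Fin N → ℝ) :
    Pairwise fun i j => stepMat N Δt v i j ≤ 0 := by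
  intro i j hij
  simpa [stepMat, matG, matDpow, hij] using
    mul_nonpos_of_nonneg_of_nonpos hΔt (pairwise_matC_nonpos hij)

theorem stepMat_mulVec_apply (Δt : ℝ) (v w : Fin N → ℝ) (i : Fin N) :
    (stepMat N Δt v *ᵥ w) i =
      w i + Δt * ((matC N *ᵥ w) i + gfun (v i) * gridx N i ^ (-2 : ℝ) * w i) := by
  simp [stepMat, matG, matDpow, add_mulVec, smul_mulVec, mulVec_diagonal, mul_add]

theorem rpow_le_stepMat_mulVec_rpow (hΔt : 0 ≤ Δt) (ha₀ : 0 ≤ a) (ha₁ : a ≤ 1) {i : Fin N}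
    (hg : a ^ 2 ≤ gfun (v i)) :
    gridx N i ^ a ≤ (stepMat N Δt v *ᵥ fun j => gridx N j ^ a) i := by
  have hx := gridx_pos i
  have hreaction : a ^ 2 * gridx N i ^ (a - 2) ≤
      gfun (v i) * gridx N i ^ (-2 : ℝ) * gridx N i ^ a := by
    rw [mul_assoc, ← rpow_add hx, neg_add_eq_sub]
    gcongr
  rw [stepMat_mulVec_apply]
  refine le_add_of_nonneg_right (mul_nonneg hΔt ?_)
  linarith [neg_sq_mul_rpow_le_matC_mulVec_rpow ha₀ ha₁ i]

theorem norm_matDpow_neg_mulVec_le_iff {K : ℝ} (hK : 0 ≤ K) :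
    ‖matDpow N (-a) *ᵥ v‖ ≤ K ↔ |v| ≤ K • fun i => gridx N i ^ a := by
  rw [pi_norm_le_iff_of_nonneg hK, Pi.le_def]
  refine forall_congr' fun i => ?_
  have hx := rpow_pos_of_pos (gridx_pos i) a
  rw [matDpow, mulVec_diagonal, norm_eq_abs, abs_mul, rpow_neg (gridx_pos i).le,
    abs_of_pos (inv_pos.2 hx), inv_mul_le_iff₀' hx]
  rfl

theorem norm_matDpow_neg_mulVec_le_of_stepMat_mulVec_eq (hΔt : 0 ≤ Δt) (ha₀ : 0 ≤ a)
    (ha₁ : a ≤ 1) (hg : ∀ i, a ^ 2 ≤ gfun (v i)) (hz : stepMat N Δt v *ᵥ z = v) :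
    ‖matDpow N (-a) *ᵥ z‖ ≤ ‖matDpow N (-a) *ᵥ v‖ := by
  have hw : ∀ i, 0 < gridx N i ^ a := fun i => rpow_pos_of_pos (gridx_pos i) a
  have hMw : ∀ i, gridx N i ^ a ≤ (stepMat N Δt v *ᵥ fun j => gridx N j ^ a) i := fun i =>
    rpow_le_stepMat_mulVec_rpow hΔt ha₀ ha₁ (hg i)
  rw [norm_matDpow_neg_mulVec_le_iff (norm_nonneg _)]
  refine abs_le_of_abs_mulVec_le (pairwise_stepMat_nonpos hΔt v) hw
    (fun i => (hw i).trans_le (hMw i)) ?_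
  rw [hz, mulVec_smul]
  exact ((norm_matDpow_neg_mulVec_le_iff (norm_nonneg _)).1 le_rfl).trans
    (smul_le_smul_of_nonneg_left hMw (norm_nonneg _))

theorem norm_le_of_stepMat_mulVec_eq (hΔt : 0 ≤ Δt) (hg : ∀ i, 0 ≤ gfun (v i))
    (hz : stepMat N Δt v *ᵥ z = v) : ‖z‖ ≤ ‖v‖ := by
  simpa [matDpow] using
    norm_matDpow_neg_mulVec_le_of_stepMat_mulVec_eq hΔt le_rfl zero_le_one (by simpa using hg) hz

end Scheme

/-- Let `α ∈ [0,1)` and `c_α ∈ (0, π/2]` with `sin(2c_α)/(2c_α) = α²`. If `‖u⁰‖_∞ ≤ c_α`,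
then the semi-implicit Euler iterates satisfy `‖D^{−α}uⁿ‖_∞ ≤ ‖D^{−α}u⁰‖_∞` for all `n`. -/
theorem stmt6 {N : ℕ} (hN : 1 ≤ N) (α : ℝ) (hα : α ∈ Set.Ico (0 : ℝ) 1)
    (cα : ℝ) (hcα : cα ∈ Set.Ioc (0 : ℝ) (π / 2))
    (hceq : Real.sin (2 * cα) / (2 * cα) = α ^ 2)
    (u0 : Fin N → ℝ) (hu0 : ‖u0‖ ≤ cα)
    (Δt : ℝ) (hΔt : 0 < Δt)
    (u : ℕ → Fin N → ℝ) (h0 : u 0 = u0)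
    (hrec : ∀ n, (stepMat N Δt (u n)).mulVec (u (n + 1)) = u n) :
    ∀ n, ‖(matDpow N (-α)).mulVec (u n)‖ ≤ ‖(matDpow N (-α)).mulVec u0‖ := by
  have hgc : gfun cα = α ^ 2 := by rw [gfun, if_neg hcα.1.ne', hceq]
  have hinv : ∀ n, ‖u n‖ ≤ cα ∧ ‖matDpow N (-α) *ᵥ u n‖ ≤ ‖matDpow N (-α) *ᵥ u0‖ := by
    intro n
    induction n with
    | zero => simpa only [h0, le_refl, and_true] using hu0
    | succ n ih =>
      obtain ⟨hc, hD⟩ := ih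
      have hg : ∀ i, α ^ 2 ≤ gfun (u n i) := fun i => by
        have hui : |u n i| ≤ cα := (norm_le_pi_norm (u n) i).trans hc
        rw [← hgc, ← gfun_abs (u n i)]
        exact antitoneOn_gfun ⟨abs_nonneg _, hui.trans hcα.2⟩ ⟨hcα.1.le, hcα.2⟩ hui
      exact ⟨(norm_le_of_stepMat_mulVec_eq hΔt.le (fun i => (sq_nonneg α).trans (hg i))
          (hrec n)).trans hc,
        (norm_matDpow_neg_mulVec_le_of_stepMat_mulVec_eq hΔt.le hα.1 hα.2.le hg (hrec n)).trans hD⟩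
  exact fun n => (hinv n).2
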